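/- Let S = K[x_1,…,x_n] be a standard graded polynomial ring over a field K of prime characteristic p, and let I ⊂ S be a proper nonzero radical graded ideal. Then for each q = p^e > 1 there exists an associated prime 𝔭 ∈ Ass(I) such that α_q(I) ≥ v(I^{[q]}) − v_𝔭(I). -/

import Mathlib

open MvPolynomial

attribute [local instance] MvPolynomial.gradedAlgebra

noncomputable section

variable {K : Type*} [Field K] {n : ℕ}

/-- The `q`-th Frobenius power `I^{[q]}` of an ideal. -/
def frobPow (I : Ideal (MvPolynomial (Fin n) K)) (q : ℕ) : Ideal (MvPolynomial (Fin n) K) :=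
  Ideal.span ((fun a => a ^ q) '' (I : Set (MvPolynomial (Fin n) K)))

/-- The associated primes of `S/I`. -/
def Ass (I : Ideal (MvPolynomial (Fin n) K)) : Set (Ideal (MvPolynomial (Fin n) K)) :=
  associatedPrimes (MvPolynomial (Fin n) K) (MvPolynomial (Fin n) K ⧸ I)

/-- The v-number of a graded ideal. -/
def vnum (I : Ideal (MvPolynomial (Fin n) K)) : ℕ :=
  sInf {d : ℕ | ∃ f : MvPolynomial (Fin n) K, f.IsHomogeneous d ∧
    ∃ 𝔭 ∈ Ass I, I.colon (Ideal.span {f}) = 𝔭}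

/-- The local v-number `v_𝔭(I)`. -/
def vnumLocal (I 𝔭 : Ideal (MvPolynomial (Fin n) K)) : ℕ :=
  sInf {d : ℕ | ∃ f : MvPolynomial (Fin n) K, f.IsHomogeneous d ∧
    I.colon (Ideal.span {f}) = 𝔭}

/-- The invariant `α_q(I)`. -/
def alphaq (I : Ideal (MvPolynomial (Fin n) K)) (q : ℕ) : ℕ :=
  sInf {d : ℕ | ∃ f : MvPolynomial (Fin n) K, f.IsHomogeneous d ∧
    f ∈ (frobPow I q).colon I ∧ f ∉ frobPow I q}

/-- The height of an ideal: the minimal height of an associated prime. -/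
def heightI (I : Ideal (MvPolynomial (Fin n) K)) : ℕ :=
  sInf {h : ℕ | ∃ 𝔭 ∈ Ass I, ∃ h𝔭 : 𝔭.IsPrime,
    Order.height (⟨𝔭, h𝔭⟩ : PrimeSpectrum (MvPolynomial (Fin n) K)) = (h : ℕ∞)}

/-- The big height of an ideal: the maximal height of an associated prime. -/
def bightI (I : Ideal (MvPolynomial (Fin n) K)) : ℕ :=
  sSup {h : ℕ | ∃ 𝔭 ∈ Ass I, ∃ h𝔭 : 𝔭.IsPrime,
    Order.height (⟨𝔭, h𝔭⟩ : PrimeSpectrum (MvPolynomial (Fin n) K)) = (h : ℕ∞)}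

/-- A graded (homogeneous) ideal with respect to the standard grading. -/
def IsGraded (I : Ideal (MvPolynomial (Fin n) K)) : Prop :=
  Ideal.IsHomogeneous (homogeneousSubmodule (Fin n) K) I

/-- A monomial ideal. -/
def IsMonomialIdeal (I : Ideal (MvPolynomial (Fin n) K)) : Prop :=
  ∃ s : Set (Fin n →₀ ℕ), I = Ideal.span ((fun a => monomial a (1 : K)) '' s)

/-
Frobenius is flat on `K[x]`, so an element that is regular modulo `I` is regular modulo `I^{[q]}`.
Hence, if `f` is a form of least degree in `(I^{[q]} : I)` outside `I^{[q]}`, prime avoidance puts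
`(I^{[q]} : f)` inside some `P ∈ Ass(I)`. Let `g` be a form of degree `v_P(I)` with `(I : g) = P`;
as `I` is radical, `g ∉ P`. Then `r f g ∈ I^{[q]}` forces `r g ∈ P`, so `r ∈ P`; conversely
`P g ⊆ I` gives `P f g ⊆ I^{[q]}`. Thus `(I^{[q]} : f g) = P`, and `v(I^{[q]}) ≤ α_q(I) + v_P(I)`.
-/

section Expand

variable {R σ : Type*} [CommSemiring R]

lemma nsmul_add_eq_nsmul_add_iff_of_lt {q : ℕ} {a b m m' : σ →₀ ℕ} (hm : ∀ i, m i < q)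
    (hm' : ∀ i, m' i < q) : q • a + m = q • b + m' ↔ a = b ∧ m = m' := by
  refine ⟨fun h => ?_, by rintro ⟨rfl, rfl⟩; rfl⟩
  have hcoord (i : σ) : q * a i + m i = q * b i + m' i := by
    simpa only [Finsupp.add_apply, Finsupp.smul_apply, smul_eq_mul] using DFunLike.congr_fun h i
  have hrem : m = m' := by
    ext i
    simpa only [Nat.mul_add_mod, Nat.mod_eq_of_lt (hm i), Nat.mod_eq_of_lt (hm' i)]
      using congrArg (· % q) (hcoord i)
  subst hrem
  refine ⟨Finsupp.ext fun i => ?_, rfl⟩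
  exact Nat.eq_of_mul_eq_mul_left (Nat.zero_lt_of_lt (hm i)) (Nat.add_right_cancel (hcoord i))

lemma coeff_expand_mul_monomial_of_lt [DecidableEq σ] {q : ℕ} {m m' : σ →₀ ℕ}
    (hm : ∀ i, m i < q) (hm' : ∀ i, m' i < q) (a : σ →₀ ℕ) (g : MvPolynomial σ R) :
    coeff (q • a + m) (expand q g * monomial m' 1) = if m' = m then coeff a g else 0 := by
  induction g using MvPolynomial.induction_on' with
  | monomial b c =>
    simp only [expand_monomial, monomial_mul, mul_one, coeff_monomial,
      nsmul_add_eq_nsmul_add_iff_of_lt hm' hm]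
    split_ifs <;> tauto
  | add g h ihg ihh => simp only [map_add, add_mul, coeff_add, ihg, ihh]; split_ifs <;> simp

lemma coeff_finsuppSum_expand_mul_monomial {q : ℕ}
    (c : {m : σ →₀ ℕ // ∀ i, m i < q} →₀ MvPolynomial σ R) (m : {m : σ →₀ ℕ // ∀ i, m i < q})
    (a : σ →₀ ℕ) :
    coeff (q • a + m.1) (c.sum fun m g => expand q g * monomial m.1 1) = coeff a (c m) := by
  classical
  have hterm (m' : {m : σ →₀ ℕ // ∀ i, m i < q}) (g : MvPolynomial σ R) :
      coeff (q • a + m.1) (expand q g * monomial m'.1 1) = if m' = m then coeff a g else 0 := by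
    rw [coeff_expand_mul_monomial_of_lt m.2 m'.2, if_congr Subtype.coe_inj rfl rfl]
  simp only [Finsupp.sum, coeff_sum, hterm, Finset.sum_ite_eq', Finsupp.mem_support_iff]
  split_ifs with hm
  · rfl
  · rw [not_not.1 hm, coeff_zero]

-- The monomials with all exponents below `q` form a basis of `R[x]` over `R[x^q]`.
lemma bijective_finsuppSum_expand_mul_monomial {q : ℕ} (hq : q ≠ 0) :
    Function.Bijective fun c : {m : σ →₀ ℕ // ∀ i, m i < q} →₀ MvPolynomial σ R =>
      c.sum fun m g => expand q g * monomial m.1 1 := by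
  refine ⟨fun c c' h => ?_, fun f => ?_⟩
  · ext m a
    rw [← coeff_finsuppSum_expand_mul_monomial c, ← coeff_finsuppSum_expand_mul_monomial c']
    exact congrArg (coeff (q • a + m.1)) h
  · induction f using MvPolynomial.induction_on' with
    | monomial d r =>
      let quot : σ →₀ ℕ := d.mapRange (· / q) (Nat.zero_div q)
      let rem : σ →₀ ℕ := d.mapRange (· % q) (Nat.zero_mod q)
      have hdiv : q • quot + rem = d := Finsupp.ext fun i => Nat.div_add_mod (d i) q
      refine ⟨.single ⟨rem, fun i => Nat.mod_lt _ (Nat.pos_of_ne_zero hq)⟩ (monomial quot r), ?_⟩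
      simp only [Finsupp.sum_single_index, map_zero, zero_mul, expand_monomial, monomial_mul,
        mul_one, hdiv]
    | add f g hf hg =>
      obtain ⟨c, rfl⟩ := hf
      obtain ⟨c', rfl⟩ := hg
      exact ⟨c + c', Finsupp.sum_add_index' (by simp) (by simp [add_mul])⟩

lemma iterateFrobenius_eq_map_comp_expand (p e : ℕ) [ExpChar R p] :
    iterateFrobenius (MvPolynomial σ R) p e =
      (MvPolynomial.map (iterateFrobenius R p e)).comp (expand (p ^ e)).toRingHom := by
  ext <;> simp [iterateFrobenius_def]

end Expand

section Flat

variable {R S σ : Type*} [CommRing R] [CommRing S]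

lemma flat_of_bijective_finsuppSum {ι : Type*} {f : R →+* S} {v : ι → S}
    (hv : Function.Bijective fun c : ι →₀ R => c.sum fun i r => f r * v i) : f.Flat := by
  algebraize [f]
  have hlin : Function.Bijective (Finsupp.linearCombination R v) := hv
  exact Module.Flat.of_linearEquiv (LinearEquiv.ofBijective _ hlin).symm

lemma flat_mvPolynomial_expand {q : ℕ} (hq : q ≠ 0) :
    (expand q : MvPolynomial σ R →ₐ[R] MvPolynomial σ R).toRingHom.Flat :=
  flat_of_bijective_finsuppSum (bijective_finsuppSum_expand_mul_monomial hq)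

lemma flat_mvPolynomial_map {f : R →+* S} (hf : f.Flat) :
    (MvPolynomial.map f : MvPolynomial σ R →+* MvPolynomial σ S).Flat := by
  algebraize [f]
  let := MvPolynomial.algebraMvPolynomial (σ := σ) (R := R) (S := S)
  exact RingHom.flat_algebraMap_iff.2 (Module.Flat.isBaseChange R (MvPolynomial σ R) S _
    (Algebra.IsPushout.out (R := R) (S := MvPolynomial σ R) (R' := S) (S' := MvPolynomial σ S)))

lemma flat_iterateFrobenius_mvPolynomial {p e : ℕ} [ExpChar R p]
    (h : (iterateFrobenius R p e).Flat) :
    (iterateFrobenius (MvPolynomial σ R) p e).Flat := by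
  rw [iterateFrobenius_eq_map_comp_expand]
  exact (flat_mvPolynomial_expand (pow_ne_zero e (expChar_pos R p).ne')).comp
    (flat_mvPolynomial_map h)

lemma isSMulRegular_quotient_map_of_flat {f : R →+* S} (hf : f.Flat) {I : Ideal R} {r : R}
    (hr : IsSMulRegular (R ⧸ I) r) : IsSMulRegular (S ⧸ I.map f) (f r) := by
  algebraize [f]
  have hreg : IsSMulRegular (S ⧸ (I • ⊤ : Submodule R S)) r :=
    ((TensorProduct.tensorQuotEquivQuotSMul S I).isSMulRegular_congr r).1 (hr.lTensor S)
  rw [Ideal.smul_top_eq_map, isSMulRegular_quotient_iff_mem_of_smul_mem] at hreg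
  rw [isSMulRegular_quotient_iff_mem_of_smul_mem]
  exact hreg

lemma isSMulRegular_quotient_map_iterateFrobenius {I : Ideal R} {p e : ℕ} [ExpChar R p]
    (hflat : (iterateFrobenius R p e).Flat) {r : R} (hr : IsSMulRegular (R ⧸ I) r) :
    IsSMulRegular (R ⧸ I.map (iterateFrobenius R p e)) r := by
  have hpow := isSMulRegular_quotient_map_of_flat hflat hr
  rw [iterateFrobenius_def] at hpow
  exact (IsSMulRegular.pow_iff (pow_pos (expChar_pos R p) e)).1 hpow

end Flat

section AssociatedPrimes

variable {R : Type*} [CommRing R] {I J P : Ideal R} {f g : R}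

lemma exists_associatedPrime_colon_le [IsNoetherianRing R]
    (hreg : ∀ r : R, IsSMulRegular (R ⧸ I) r → IsSMulRegular (R ⧸ J) r) (hf : f ∉ J) :
    ∃ P ∈ associatedPrimes R (R ⧸ I), J.colon {f} ≤ P := by
  refine (Ideal.subset_union_prime_finite (associatedPrimes.finite R (R ⧸ I)) (f := id) ⊥ ⊥
    fun P hP _ _ => hP.isPrime).1 fun r hr => ?_
  simp only [id]
  rw [biUnion_associatedPrimes_eq_compl_regular]
  exact fun hrI => hf (mem_of_isSMulRegular_quotient_of_smul_mem (hreg r hrI)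
    (Submodule.mem_colon_singleton.1 hr))

lemma colon_bot_mk (I : Ideal R) (g : R) :
    (⊥ : Submodule R (R ⧸ I)).colon {Ideal.Quotient.mk I g} = I.colon {g} := by
  ext x
  rw [Submodule.mem_colon_singleton, Submodule.mem_colon_singleton, Submodule.mem_bot,
    smul_eq_mul, ← Ideal.Quotient.eq_zero_iff_mem, map_mul, Algebra.smul_def]
  rfl

lemma mem_associatedPrimes_of_colon_eq [hP : P.IsPrime] (hg : I.colon {g} = P) :
    P ∈ associatedPrimes R (R ⧸ I) := by
  refine ⟨hP, Ideal.Quotient.mk I g, ?_⟩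
  rw [colon_bot_mk, hg, hP.radical]

lemma colon_singleton_le_of_notMem [hP : P.IsPrime] (hIP : I ≤ P) (hg : g ∉ P) :
    I.colon {g} ≤ P :=
  fun _ hr => (hP.mem_or_mem (hIP (Submodule.mem_colon_singleton.1 hr))).resolve_right hg

lemma notMem_of_colon_eq_of_isRadical [hP : P.IsPrime] (hI : I.IsRadical)
    (hg : I.colon {g} = P) : g ∉ P := by
  intro hgP
  have hgI : g ∈ I := hI ⟨2, by
    rw [pow_two]; exact Submodule.mem_colon_singleton.1 (hg.ge hgP)⟩
  refine hP.ne_top ?_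
  rw [← hg, Submodule.colon_eq_top_iff_subset, Set.singleton_subset_iff]
  exact hgI

lemma associatedPrimes_subset_minimalPrimes (hI : I.IsRadical) :
    associatedPrimes R (R ⧸ I) ⊆ I.minimalPrimes := by
  rintro P ⟨hP, x, hx⟩
  obtain ⟨g, rfl⟩ := Ideal.Quotient.mk_surjective x
  have hP_eq : P = (I.colon {g}).radical := by rw [hx, colon_bot_mk]
  have hgI : g ∉ I := fun hgI => hP.ne_top <| by
    have htop : I.colon {g} = ⊤ :=
      (Submodule.colon_eq_top_iff_subset _).2 (Set.singleton_subset_iff.2 hgI)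
    rw [hP_eq, htop, Ideal.radical_top]
  obtain ⟨Q, hQ, hgQ⟩ : ∃ Q ∈ I.minimalPrimes, g ∉ Q := by
    by_contra! hall
    exact hgI (hI.radical ▸ I.sInf_minimalPrimes ▸ Submodule.mem_sInf.2 hall)
  have hQprime : Q.IsPrime := hQ.1.1
  have hPQ : P ≤ Q := by
    rw [hP_eq, hQprime.radical_le_iff]
    exact colon_singleton_le_of_notMem hQ.1.2 hgQ
  have hIP : I ≤ P := by
    rw [hP_eq]
    exact Ideal.le_colon.trans Ideal.le_radical
  rwa [hPQ.antisymm (hQ.2 ⟨hP, hIP⟩ hPQ)]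

lemma not_sInf_minimalPrimes_diff_singleton_le [IsNoetherianRing R] (hP : P ∈ I.minimalPrimes) :
    ¬ sInf (I.minimalPrimes \ {P}) ≤ P := by
  intro hle
  have hfin : (I.minimalPrimes \ {P}).Finite :=
    I.finite_minimalPrimes_of_isNoetherianRing.subset Set.sdiff_subset
  rw [← hfin.coe_toFinset, ← Finset.inf_id_eq_sInf, hP.1.1.inf_le'] at hle
  obtain ⟨Q, hQ, hQP⟩ := hle
  rw [Set.Finite.mem_toFinset] at hQ
  exact hQ.2 (le_antisymm hQP (hP.2 hQ.1.1 hQP))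

lemma colon_mul_eq_of_colon_le [P.IsPrime] (hI : I.IsRadical) (hg : I.colon {g} = P)
    (hfI : f ∈ J.colon (I : Set R)) (hfP : J.colon {f} ≤ P) : J.colon {f * g} = P := by
  have hcolon : J.colon {f * g} = (J.colon {f}).colon {g} := by
    ext r
    simp only [Submodule.mem_colon_singleton, smul_eq_mul]
    rw [mul_assoc, mul_comm g]
  have hIf : I ≤ J.colon {f} := fun r hr => Submodule.mem_colon_singleton.2 <| by
    simpa only [smul_eq_mul, mul_comm f] using Submodule.mem_colon.1 hfI r hr
  rw [hcolon]
  exact le_antisymm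
    (colon_singleton_le_of_notMem hfP (notMem_of_colon_eq_of_isRadical hI hg))
    (hg.ge.trans (Submodule.colon_mono hIf le_rfl))

end AssociatedPrimes

section Graded

variable {ι σ A : Type*} [CommRing A] [SetLike σ A] [AddSubmonoidClass σ A] {𝒜 : ι → σ}
  {I J P : Ideal A}

lemma exists_homogeneous_mem_notMem [DecidableEq ι] [AddMonoid ι] [GradedRing 𝒜]
    (hI : I.IsHomogeneous 𝒜) (hIJ : ¬ I ≤ J) : ∃ d, ∃ f ∈ 𝒜 d, f ∈ I ∧ f ∉ J := by
  classical
  by_contra! hc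
  refine hIJ fun x hx => ?_
  rw [← DirectSum.sum_support_decompose 𝒜 x]
  exact Ideal.sum_mem _ fun d _ => hc d _ (SetLike.coe_mem _) (hI d hx)

lemma isHomogeneous_pow [DecidableEq ι] [AddCommMonoid ι] [GradedRing 𝒜]
    (hI : I.IsHomogeneous 𝒜) (k : ℕ) : (I ^ k).IsHomogeneous 𝒜 := by
  induction k with
  | zero => rw [pow_zero, Ideal.one_eq_top]; exact Ideal.IsHomogeneous.top 𝒜
  | succ k ih => rw [pow_succ]; exact ih.mul hI

lemma exists_homogeneous_mem_colon_notMem [DecidableEq ι] [AddCommMonoid ι] [GradedRing 𝒜]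
    (hI : I.IsHomogeneous 𝒜) (hfg : I.FG) (hIJ : I ≤ J.radical) (hJ : J ≠ ⊤) :
    ∃ d, ∃ f ∈ 𝒜 d, f ∈ J.colon (I : Set A) ∧ f ∉ J := by
  classical
  have hex : ∃ k, I ^ k ≤ J := Ideal.exists_pow_le_of_le_radical_of_fg hIJ hfg
  obtain ⟨k, hk⟩ : ∃ k, Nat.find hex = k + 1 := by
    refine Nat.exists_eq_succ_of_ne_zero fun h0 => hJ (top_le_iff.1 ?_)
    simpa only [h0, pow_zero, Ideal.one_eq_top] using Nat.find_spec hex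
  have hlt : ¬ I ^ k ≤ J := Nat.find_min hex (by omega)
  have hle : I ^ k * I ≤ J := by simpa only [hk, pow_succ] using Nat.find_spec hex
  obtain ⟨d, f, hfd, hfI, hfJ⟩ := exists_homogeneous_mem_notMem (isHomogeneous_pow hI k) hlt
  exact ⟨d, f, hfd, Submodule.mem_colon.2 fun s hs => hle (Ideal.mul_mem_mul hfI hs), hfJ⟩

variable [AddCommMonoid ι] [LinearOrder ι] [IsOrderedCancelAddMonoid ι] [GradedRing 𝒜]

lemma isHomogeneous_of_mem_minimalPrimes (hI : I.IsHomogeneous 𝒜) (hP : P ∈ I.minimalPrimes) :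
    P.IsHomogeneous 𝒜 := by
  have hcore : (P.homogeneousCore 𝒜).toIdeal ≤ P := Ideal.toIdeal_homogeneousCore_le 𝒜 P
  have hIcore : I ≤ (P.homogeneousCore 𝒜).toIdeal := by
    rw [← hI.toIdeal_homogeneousCore_eq_self]
    exact Ideal.homogeneousCore_mono 𝒜 hP.1.2
  exact Ideal.IsHomogeneous.iff_eq 𝒜 P |>.2
    (hcore.antisymm (hP.2 ⟨hP.1.1.homogeneousCore, hIcore⟩ hcore))

lemma exists_homogeneous_colon_eq_of_mem_minimalPrimes [IsNoetherianRing A]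
    (hI : I.IsHomogeneous 𝒜) (hrad : I.IsRadical) (hP : P ∈ I.minimalPrimes) :
    ∃ d, ∃ g ∈ 𝒜 d, I.colon {g} = P := by
  have hprime : P.IsPrime := hP.1.1
  obtain ⟨d, g, hgd, hgmem, hgP⟩ := exists_homogeneous_mem_notMem
    (Ideal.IsHomogeneous.sInf fun _ hQ => isHomogeneous_of_mem_minimalPrimes hI hQ.1)
    (not_sInf_minimalPrimes_diff_singleton_le hP)
  refine ⟨d, g, hgd, le_antisymm (colon_singleton_le_of_notMem hP.1.2 hgP) fun r hr => ?_⟩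
  have hall (Q) (hQ : Q ∈ I.minimalPrimes) : r * g ∈ Q := by
    obtain rfl | hQP := eq_or_ne Q P
    · exact Q.mul_mem_right g hr
    · exact Q.mul_mem_left r (Submodule.mem_sInf.1 hgmem Q ⟨hQ, hQP⟩)
  rw [Submodule.mem_colon_singleton, smul_eq_mul, ← hrad.radical, ← I.sInf_minimalPrimes]
  exact Submodule.mem_sInf.2 hall

end Graded

section VNumber

variable {I P : Ideal (MvPolynomial (Fin n) K)}

lemma frobPow_eq_map_iterateFrobenius (p e : ℕ) [ExpChar K p]
    (I : Ideal (MvPolynomial (Fin n) K)) :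
    frobPow I (p ^ e) = I.map (iterateFrobenius (MvPolynomial (Fin n) K) p e) := rfl

lemma exists_mem_Ass_colon_frobPow_le (p e : ℕ) [ExpChar K p] {f : MvPolynomial (Fin n) K}
    (hf : f ∉ frobPow I (p ^ e)) : ∃ P ∈ Ass I, (frobPow I (p ^ e)).colon {f} ≤ P := by
  rw [frobPow_eq_map_iterateFrobenius] at hf ⊢
  exact exists_associatedPrime_colon_le (fun _ => isSMulRegular_quotient_map_iterateFrobenius
    (flat_iterateFrobenius_mvPolynomial (.of_isField (Field.toIsField K) _))) hf

lemma vnum_le_of_colon_eq [P.IsPrime] {d : ℕ} {f : MvPolynomial (Fin n) K}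
    (hd : f.IsHomogeneous d) (hf : I.colon {f} = P) : vnum I ≤ d :=
  Nat.sInf_le ⟨f, hd, P, mem_associatedPrimes_of_colon_eq hf, by rwa [Ideal.colon_span]⟩

lemma exists_isHomogeneous_vnumLocal (hgr : IsGraded I) (hrad : I.IsRadical) (hP : P ∈ Ass I) :
    ∃ g : MvPolynomial (Fin n) K, g.IsHomogeneous (vnumLocal I P) ∧ I.colon {g} = P := by
  obtain ⟨d, g, hgd, hg⟩ := exists_homogeneous_colon_eq_of_mem_minimalPrimes hgr hrad
    (associatedPrimes_subset_minimalPrimes hrad hP)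
  obtain ⟨g', hgd', hg'⟩ := Nat.sInf_mem (s := {d | ∃ g : MvPolynomial (Fin n) K,
    g.IsHomogeneous d ∧ I.colon (Ideal.span {g}) = P}) ⟨d, g, hgd, by rwa [Ideal.colon_span]⟩
  exact ⟨g', hgd', by rwa [Ideal.colon_span] at hg'⟩

lemma frobPow_le {q : ℕ} (hq : q ≠ 0) : frobPow I q ≤ I := by
  refine Ideal.span_le.2 ?_
  rintro _ ⟨a, ha, rfl⟩
  exact Ideal.pow_mem_of_mem I ha q (Nat.pos_of_ne_zero hq)

lemma le_radical_frobPow (q : ℕ) : I ≤ (frobPow I q).radical :=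
  fun a ha => ⟨q, Ideal.subset_span ⟨a, ha, rfl⟩⟩

lemma exists_isHomogeneous_alphaq (hgr : IsGraded I) (htop : I ≠ ⊤) {q : ℕ} (hq : q ≠ 0) :
    ∃ f : MvPolynomial (Fin n) K, f.IsHomogeneous (alphaq I q) ∧
      f ∈ (frobPow I q).colon (I : Set (MvPolynomial (Fin n) K)) ∧ f ∉ frobPow I q :=
  Nat.sInf_mem (exists_homogeneous_mem_colon_notMem hgr (IsNoetherian.noetherian I)
    (le_radical_frobPow q) (ne_top_of_le_ne_top htop (frobPow_le hq)))

end VNumber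

theorem stmt17 {K : Type*} [Field K] {n : ℕ} (p : ℕ) (hp : p.Prime) [CharP K p]
    (I : Ideal (MvPolynomial (Fin n) K)) (hgr : IsGraded I) (htop : I ≠ ⊤) (hbot : I ≠ ⊥)
    (hrad : I.IsRadical)
    (q : ℕ) (hq : ∃ e : ℕ, q = p ^ e) (hq1 : 1 < q) :
    ∃ 𝔭 ∈ Ass I, (vnum (frobPow I q) : ℤ) - (vnumLocal I 𝔭 : ℤ) ≤ (alphaq I q : ℤ) := by
  obtain ⟨e, rfl⟩ := hq
  have : ExpChar K p := .prime hp
  obtain ⟨f, hfd, hfI, hf⟩ := exists_isHomogeneous_alphaq hgr htop (pow_ne_zero e hp.ne_zero)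
  obtain ⟨P, hP, hfP⟩ := exists_mem_Ass_colon_frobPow_le p e hf
  have : P.IsPrime := hP.isPrime
  obtain ⟨g, hgd, hg⟩ := exists_isHomogeneous_vnumLocal hgr hrad hP
  refine ⟨P, hP, ?_⟩
  have hv : vnum (frobPow I (p ^ e)) ≤ alphaq I (p ^ e) + vnumLocal I P :=
    vnum_le_of_colon_eq (hfd.mul hgd) (colon_mul_eq_of_colon_le hrad hg hfI hfP)
  omega

end
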